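/- Let u be defined by u(t, x) = F_p(t, Δ(t, x)) for x > 0 and u(t, x) = −F_p(t, Δ(t, −x)) for x < 0, and let w∞(x) = −sgn(x) √(2(1 − g(x))). Then for every compact set K ⊂ ℝ ∖ {0}, u(t, ·) converges to w∞ uniformly on K as t → +∞. -/

import Mathlib

open Real Set Filter MeasureTheory
open scoped Topology

/-- The potential `g` from the Hamiltonian `H(x,p) = p²/2 + g(x)`. -/
noncomputable def g (x : ℝ) : ℝ := if |x| ≤ 1 then 1 - (1 - x ^ 2) ^ 4 else 1

/-- The derivative of `g`. -/
noncomputable def g' (x : ℝ) : ℝ := if |x| ≤ 1 then 8 * x * (1 - x ^ 2) ^ 3 else 0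

/-- `(q, p)` is a (global) solution of the Hamiltonian system (HS): `q̇ = p`, `ṗ = -g'(q)`. -/
def IsHSSol (q p : ℝ → ℝ) : Prop :=
  (∀ t : ℝ, HasDerivAt q (p t) t) ∧ (∀ t : ℝ, HasDerivAt p (-(g' (q t))) t)

/-- `F` is the flow of (HS): `F t q₀ p₀ = (q t, p t)` for the solution with data `(q₀, p₀)`. -/
def IsHSFlow (F : ℝ → ℝ → ℝ → ℝ × ℝ) : Prop :=
  ∀ q₀ p₀ : ℝ,
    IsHSSol (fun t => (F t q₀ p₀).1) (fun t => (F t q₀ p₀).2) ∧ F 0 q₀ p₀ = (q₀, p₀)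

/-- The set `([0,∞) × {2}) ∪ ({0} × (0,2])`, codomain of the map `Δ`. -/
def Dset : Set (ℝ × ℝ) := (Ici (0:ℝ) ×ˢ ({2} : Set ℝ)) ∪ ({(0:ℝ)} ×ˢ Ioc (0:ℝ) 2)

/-- `T` is the smallest positive period of `q`. -/
def IsSmallestPeriod (q : ℝ → ℝ) (T : ℝ) : Prop :=
  0 < T ∧ Function.Periodic q T ∧ ∀ T' : ℝ, 0 < T' → Function.Periodic q T' → T ≤ T'

/-- `T` is the period map `𝒯`, assigning to `p₀ ∈ (0, √2)` the smallest positive period of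
the `q`-component of the solution of (HS) with initial datum `(0, p₀)`. -/
def IsPeriodMap (F : ℝ → ℝ → ℝ → ℝ × ℝ) (T : ℝ → ℝ) : Prop :=
  ∀ p₀ ∈ Ioo (0:ℝ) (Real.sqrt 2), IsSmallestPeriod (fun t => (F t 0 p₀).1) (T p₀)

/-- `Δ` associates to `(t,x)` the datum in `Dset` whose orbit stays positive on `(0,t)`
and reaches `x` at time `t`. -/
def IsDeltaMap (F : ℝ → ℝ → ℝ → ℝ × ℝ) (Δ : ℝ → ℝ → ℝ × ℝ) : Prop :=
  ∀ t x : ℝ, 0 < t → 0 < x →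
    Δ t x ∈ Dset ∧ (F t (Δ t x).1 (Δ t x).2).1 = x ∧
      ∀ s ∈ Ioo (0:ℝ) t, 0 < (F s (Δ t x).1 (Δ t x).2).1

/-- The solution `u` of the conservation law built from the flow `F` and the map `Δ`
(extended by `0` at `x = 0`). -/
noncomputable def usol (F : ℝ → ℝ → ℝ → ℝ × ℝ) (Δ : ℝ → ℝ → ℝ × ℝ) (t x : ℝ) : ℝ :=
  if 0 < x then (F t (Δ t x).1 (Δ t x).2).2
  else if x < 0 then -(F t (Δ t (-x)).1 (Δ t (-x)).2).2
  else 0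

/-!
Along the orbit ending at `(q t, p t) = (x, u t x)` the energy `E = p² / 2 + g q` is conserved, so
`u` differs from `-√(2 (1 - g x))` for two reasons only: the energy need not be `1`, and
`p t` need not be negative. Three estimates control this.

* The orbit starts with `p > 0` and cannot cross the lower separatrix `p = -√(2 (1 - g q))`.
* While `q > 0` the momentum decreases, so `q` is concave and `p t ≤ x / t`.
* If `E ≤ 1 - ω² / 8` then `g' q ≥ ω² q`, and Sturm comparison with `sin (ω s)` forces `q` to vanish
  by time `π / ω`. As `q` stays positive up to time `t`, `E > 1 - (π / t)² / 8`.

Together they give `|u t x - w∞ x| ≤ (π / 2 + 2 |x|) / t`.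
-/

theorem hasDerivAt_max_zero_pow (n : ℕ) (y : ℝ) :
    HasDerivAt (fun y : ℝ => max y 0 ^ (n + 2)) ((n + 2) * max y 0 ^ (n + 1)) y := by
  have of_ne_zero : ∀ y : ℝ, y ≠ 0 →
      HasDerivAt (fun y : ℝ => max y 0 ^ (n + 2)) ((n + 2) * max y 0 ^ (n + 1)) y := by
    intro y hy
    rcases lt_or_gt_of_ne hy with hneg | hpos
    · rw [max_eq_right hneg.le, zero_pow n.succ_ne_zero, mul_zero]
      refine (hasDerivAt_const y (0 : ℝ)).congr_of_eventuallyEq ?_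
      filter_upwards [Iio_mem_nhds hneg] with z hz
      rw [max_eq_right (le_of_lt hz), zero_pow (n + 1).succ_ne_zero]
    · rw [max_eq_left hpos.le]
      have hpow : HasDerivAt (fun y : ℝ => y ^ (n + 2)) ((n + 2) * y ^ (n + 1)) y := by
        simpa using hasDerivAt_pow (n + 2) y
      refine hpow.congr_of_eventuallyEq ?_
      filter_upwards [Ioi_mem_nhds hpos] with z hz
      rw [max_eq_left (le_of_lt hz)]
  exact hasDerivAt_of_hasDerivAt_of_ne' of_ne_zero (by fun_prop) (by fun_prop) y

theorem mul_sub_le_sub_of_antitoneOn_deriv {f f' : ℝ → ℝ} {a b : ℝ} (hab : a ≤ b)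
    (hf : ∀ x ∈ Icc a b, HasDerivAt f (f' x) x) (hf' : AntitoneOn f' (Icc a b)) :
    f' b * (b - a) ≤ f b - f a := by
  rcases hab.eq_or_lt with rfl | hlt
  · simp
  obtain ⟨c, hc, hslope⟩ := exists_hasDerivAt_eq_slope f f' hlt
    (fun x hx => (hf x hx).continuousAt.continuousWithinAt)
    fun x hx => hf x (Ioo_subset_Icc_self hx)
  rw [← le_div_iff₀ (sub_pos.2 hlt), ← hslope]
  exact hf' (Ioo_subset_Icc_self hc) (right_mem_Icc.2 hab) hc.2.le

theorem sturm_comparison_sin {q p p' : ℝ → ℝ} {a ω : ℝ} (hω : 0 < ω)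
    (hq : ∀ s ∈ Icc a (a + π / ω), HasDerivAt q (p s) s)
    (hp : ∀ s ∈ Icc a (a + π / ω), HasDerivAt p (p' s) s)
    (hle : ∀ s ∈ Ioo a (a + π / ω), p' s ≤ -(ω ^ 2 * q s)) :
    q (a + π / ω) ≤ -q a := by
  let wronskian : ℝ → ℝ := fun s => p s * sin (ω * (s - a)) - q s * (ω * cos (ω * (s - a)))
  have hasDerivAt_wronskian : ∀ s ∈ Icc a (a + π / ω),
      HasDerivAt wronskian ((p' s + ω ^ 2 * q s) * sin (ω * (s - a))) s := by
    intro s hs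
    have hphase : HasDerivAt (fun s => ω * (s - a)) ω s := by
      simpa using ((hasDerivAt_id s).sub_const a).const_mul ω
    refine (((hp s hs).mul hphase.sin).sub
      ((hq s hs).mul (hphase.cos.const_mul ω))).congr_deriv ?_
    ring
  have hwronskian : AntitoneOn wronskian (Icc a (a + π / ω)) := by
    refine antitoneOn_of_hasDerivWithinAt_nonpos (convex_Icc _ _)
      (fun s hs => (hasDerivAt_wronskian s hs).continuousAt.continuousWithinAt)
      (fun s hs => (hasDerivAt_wronskian s (interior_subset hs)).hasDerivWithinAt) fun s hs => ?_
    rw [interior_Icc] at hs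
    have hphase_le : ω * (s - a) ≤ π := (le_div_iff₀' hω).1 (by linarith [hs.2])
    have hsin : 0 ≤ sin (ω * (s - a)) :=
      sin_nonneg_of_nonneg_of_le_pi (mul_nonneg hω.le (sub_nonneg.2 hs.1.le)) hphase_le
    exact mul_nonpos_of_nonpos_of_nonneg (by linarith [hle s hs]) hsin
  have hend : a ≤ a + π / ω := le_add_of_nonneg_right (by positivity)
  have hwronskian_le : wronskian (a + π / ω) ≤ wronskian a :=
    hwronskian (left_mem_Icc.2 hend) (right_mem_Icc.2 hend) hend
  simp only [wronskian, add_sub_cancel_left, mul_div_cancel₀ π hω.ne', sub_self, mul_zero,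
    sin_pi, sin_zero, cos_pi, cos_zero] at hwronskian_le
  nlinarith

/-- The energy `p² / 2 + V q` of a unit mass at position `q` with momentum `p` in the
potential `V`. -/
noncomputable def hamiltonian (V : ℝ → ℝ) (q p : ℝ) : ℝ := p ^ 2 / 2 + V q

section Hamiltonian

variable {V V' q p : ℝ → ℝ}

theorem hamiltonian_conserved (hV : ∀ x, HasDerivAt V (V' x) x)
    (hq : ∀ t, HasDerivAt q (p t) t) (hp : ∀ t, HasDerivAt p (-V' (q t)) t) (s t : ℝ) :
    hamiltonian V (q s) (p s) = hamiltonian V (q t) (p t) := by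
  have hderiv : ∀ s, HasDerivAt (fun s => hamiltonian V (q s) (p s)) 0 s := fun s => by
    refine ((((hp s).pow 2).div_const 2).add ((hV (q s)).comp s (hq s))).congr_deriv ?_
    push_cast
    ring
  exact is_const_of_deriv_eq_zero (fun s => (hderiv s).differentiableAt)
    (fun s => (hderiv s).deriv) s t

theorem neg_sqrt_le_momentum (hV : ∀ x, HasDerivAt V (V' x) x)
    (hq : ∀ t, HasDerivAt q (p t) t) (hp : ∀ t, HasDerivAt p (-V' (q t)) t)
    {M : ℝ} (hM : ∀ x, V x ≤ M) {t₀ : ℝ} (hp₀ : 0 ≤ p t₀) (t : ℝ) :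
    -√(2 * (M - V (q t))) ≤ p t := by
  by_contra! hlt
  have hp_neg : p t < 0 := hlt.trans_le (neg_nonpos.2 (sqrt_nonneg _))
  have henergy : M < hamiltonian V (q t) (p t) := by
    have hsq : 2 * (M - V (q t)) < p t ^ 2 := by
      rw [← neg_sq]
      exact (sqrt_lt' (neg_pos.2 hp_neg)).1 (lt_neg.1 hlt)
    unfold hamiltonian
    linarith
  have hcont : Continuous p := continuous_iff_continuousAt.2 fun s => (hp s).continuousAt
  obtain ⟨s, hs⟩ : (0 : ℝ) ∈ range p :=
    mem_range_of_exists_le_of_exists_ge hcont ⟨t, hp_neg.le⟩ ⟨t₀, hp₀⟩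
  rw [hamiltonian_conserved hV hq hp t s, hamiltonian, hs] at henergy
  linarith [hM (q s)]

end Hamiltonian

theorem g_eq_one_sub_max_pow (x : ℝ) : g x = 1 - max (1 - x ^ 2) 0 ^ 4 := by
  unfold g
  split_ifs with h <;> rw [← sq_le_one_iff_abs_le_one] at h
  · rw [max_eq_left (by linarith)]
  · rw [max_eq_right (by linarith)]
    norm_num

theorem g'_eq_mul_max_pow (x : ℝ) : g' x = 8 * x * max (1 - x ^ 2) 0 ^ 3 := by
  unfold g'
  split_ifs with h <;> rw [← sq_le_one_iff_abs_le_one] at h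
  · rw [max_eq_left (by linarith)]
  · rw [max_eq_right (by linarith)]
    norm_num

theorem hasDerivAt_g (x : ℝ) : HasDerivAt g (g' x) x := by
  have hinner : HasDerivAt (fun x : ℝ => 1 - x ^ 2) (-(2 * x)) x := by
    simpa using (hasDerivAt_pow 2 x).const_sub 1
  rw [funext g_eq_one_sub_max_pow, g'_eq_mul_max_pow]
  refine (((hasDerivAt_max_zero_pow 2 (1 - x ^ 2)).comp x hinner).const_sub 1).congr_deriv ?_
  push_cast
  ring

theorem g_le_one (x : ℝ) : g x ≤ 1 := by
  rw [g_eq_one_sub_max_pow]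
  exact sub_le_self _ (by positivity)

theorem g_neg (x : ℝ) : g (-x) = g x := by simp [g]

theorem g'_nonneg {x : ℝ} (hx : 0 ≤ x) : 0 ≤ g' x := by
  rw [g'_eq_mul_max_pow]
  positivity

theorem mul_one_sub_g_le_g' {x : ℝ} (hx : 0 ≤ x) : 8 * x * (1 - g x) ≤ g' x := by
  rw [g_eq_one_sub_max_pow, g'_eq_mul_max_pow, sub_sub_cancel]
  have hmax_le_one : max (1 - x ^ 2) 0 ≤ 1 := max_le (by nlinarith) zero_le_one
  exact mul_le_mul_of_nonneg_left
    (pow_le_pow_of_le_one (le_max_right _ _) hmax_le_one (by norm_num)) (by positivity)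

namespace IsHSSol

variable {q p : ℝ → ℝ} {t : ℝ}

theorem hamiltonian_eq (h : IsHSSol q p) (s t : ℝ) :
    hamiltonian g (q s) (p s) = hamiltonian g (q t) (p t) :=
  hamiltonian_conserved hasDerivAt_g h.1 h.2 s t

theorem momentum_le_div (h : IsHSSol q p) (ht : 0 < t) (hq₀ : 0 ≤ q 0)
    (hpos : ∀ s ∈ Ioo 0 t, 0 < q s) : p t ≤ q t / t := by
  have hanti : AntitoneOn p (Icc 0 t) := by
    refine antitoneOn_of_hasDerivWithinAt_nonpos (convex_Icc _ _)
      (fun s _ => (h.2 s).continuousAt.continuousWithinAt)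
      (fun s _ => (h.2 s).hasDerivWithinAt) fun s hs => ?_
    rw [interior_Icc] at hs
    exact neg_nonpos.2 (g'_nonneg (hpos s hs).le)
  have hchord := mul_sub_le_sub_of_antitoneOn_deriv ht.le (fun s _ => h.1 s) hanti
  rw [le_div_iff₀ ht]
  linarith

theorem one_sub_lt_hamiltonian (h : IsHSSol q p) (ht : 0 < t) (hq₀ : 0 ≤ q 0)
    (hpos : ∀ s ∈ Ioc 0 t, 0 < q s) : 1 - (π / t) ^ 2 / 8 < hamiltonian g (q t) (p t) := by
  by_contra! hle
  have hend : 0 + π / (π / t) = t := by rw [zero_add, div_div_cancel₀ pi_ne_zero]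
  have hforce : ∀ s ∈ Ioo 0 t, -g' (q s) ≤ -((π / t) ^ 2 * q s) := by
    intro s hs
    have hqs : 0 < q s := hpos s (Ioo_subset_Ioc_self hs)
    have hdepth : (π / t) ^ 2 ≤ 8 * (1 - g (q s)) := by
      rw [h.hamiltonian_eq t s, hamiltonian] at hle
      linarith [sq_nonneg (p s)]
    refine neg_le_neg ?_
    calc (π / t) ^ 2 * q s ≤ 8 * (1 - g (q s)) * q s := mul_le_mul_of_nonneg_right hdepth hqs.le
      _ = 8 * q s * (1 - g (q s)) := by ring
      _ ≤ g' (q s) := mul_one_sub_g_le_g' hqs.le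
  have hcompare := sturm_comparison_sin (a := 0) (div_pos pi_pos ht) (fun s _ => h.1 s)
    (fun s _ => h.2 s) (hend.symm ▸ hforce)
  rw [hend] at hcompare
  linarith [hpos t (right_mem_Ioc.2 ht)]

theorem sqrt_le_abs_momentum_add (h : IsHSSol q p) (ht : 0 < t) (hq₀ : 0 ≤ q 0)
    (hpos : ∀ s ∈ Ioc 0 t, 0 < q s) : √(2 * (1 - g (q t))) ≤ |p t| + π / t / 2 := by
  have hω : 0 < π / t := div_pos pi_pos ht
  have henergy := h.one_sub_lt_hamiltonian ht hq₀ hpos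
  rw [hamiltonian] at henergy
  refine (sqrt_le_left (by positivity)).2 ?_
  calc 2 * (1 - g (q t)) ≤ |p t| ^ 2 + (π / t / 2) ^ 2 := by rw [sq_abs]; linarith
    _ ≤ (|p t| + π / t / 2) ^ 2 := by nlinarith [mul_nonneg (abs_nonneg (p t)) hω.le]

theorem abs_momentum_add_sqrt_le (h : IsHSSol q p) (ht : 0 < t) (hq₀ : 0 ≤ q 0) (hp₀ : 0 ≤ p 0)
    (hpos : ∀ s ∈ Ioc 0 t, 0 < q s) :
    |p t + √(2 * (1 - g (q t)))| ≤ (π / 2 + 2 * q t) / t := by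
  have habove : -√(2 * (1 - g (q t))) ≤ p t :=
    neg_sqrt_le_momentum hasDerivAt_g h.1 h.2 g_le_one hp₀ t
  have hmomentum : p t ≤ q t / t :=
    h.momentum_le_div ht hq₀ fun s hs => hpos s (Ioo_subset_Ioc_self hs)
  have hsqrt := h.sqrt_le_abs_momentum_add ht hq₀ hpos
  have hqt : 0 ≤ q t / t := (div_pos (hpos t (right_mem_Ioc.2 ht)) ht).le
  have hsum : p t + |p t| ≤ 2 * (q t / t) := by
    rcases abs_cases (p t) with ⟨habs, -⟩ | ⟨habs, -⟩ <;> rw [habs] <;> linarith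
  calc |p t + √(2 * (1 - g (q t)))| = p t + √(2 * (1 - g (q t))) := abs_of_nonneg (by linarith)
    _ ≤ π / t / 2 + 2 * (q t / t) := by linarith
    _ = (π / 2 + 2 * q t) / t := by ring

end IsHSSol

theorem nonneg_and_pos_of_mem_Dset {z : ℝ × ℝ} (hz : z ∈ Dset) : 0 ≤ z.1 ∧ 0 < z.2 := by
  rcases hz with ⟨hpos, hmom⟩ | ⟨hpos, hmom⟩
  · exact ⟨hpos, (mem_singleton_iff.1 hmom).symm ▸ two_pos⟩
  · exact ⟨(mem_singleton_iff.1 hpos).ge, hmom.1⟩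

section Solution

variable {F : ℝ → ℝ → ℝ → ℝ × ℝ} {Δ : ℝ → ℝ → ℝ × ℝ}

theorem usol_neg (t x : ℝ) : usol F Δ t (-x) = -usol F Δ t x := by
  rcases lt_trichotomy x 0 with hx | rfl | hx
  · simp [usol, hx, hx.not_gt]
  · simp [usol]
  · simp [usol, hx, hx.not_gt]

theorem abs_usol_add_sqrt_le (hF : IsHSFlow F) (hΔ : IsDeltaMap F Δ) {t x : ℝ} (ht : 0 < t)
    (hx : 0 < x) : |usol F Δ t x + √(2 * (1 - g x))| ≤ (π / 2 + 2 * x) / t := by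
  obtain ⟨hmem, hfinal, hpos⟩ := hΔ t x ht hx
  obtain ⟨hsol, hinit⟩ := hF (Δ t x).1 (Δ t x).2
  obtain ⟨hq₀, hp₀⟩ := nonneg_and_pos_of_mem_Dset hmem
  have hpos' : ∀ s ∈ Ioc 0 t, 0 < (F s (Δ t x).1 (Δ t x).2).1 := by
    intro s hs
    rcases hs.2.eq_or_lt with rfl | hst
    · exact hfinal.symm ▸ hx
    · exact hpos s ⟨hs.1, hst⟩
  have hbound := hsol.abs_momentum_add_sqrt_le ht (by simpa only [hinit] using hq₀)
    (by simpa only [hinit] using hp₀.le) hpos'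
  simpa only [usol, if_pos hx, hfinal] using hbound

theorem abs_usol_sub_le (hF : IsHSFlow F) (hΔ : IsDeltaMap F Δ) {t x : ℝ} (ht : 0 < t)
    (hx : x ≠ 0) :
    |usol F Δ t x - -(Real.sign x) * √(2 * (1 - g x))| ≤ (π / 2 + 2 * |x|) / t := by
  rcases lt_or_gt_of_ne hx with hneg | hpos
  · have hbound := abs_usol_add_sqrt_le hF hΔ ht (neg_pos.2 hneg)
    rw [usol_neg, g_neg, neg_add_eq_sub, abs_sub_comm] at hbound
    simpa [Real.sign_of_neg hneg, abs_of_neg hneg] using hbound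
  · simpa [Real.sign_of_pos hpos, abs_of_pos hpos] using abs_usol_add_sqrt_le hF hΔ ht hpos

end Solution

theorem stmt_18_general (F : ℝ → ℝ → ℝ → ℝ × ℝ) (hF : IsHSFlow F)
    (Δ : ℝ → ℝ → ℝ × ℝ) (hΔ : IsDeltaMap F Δ) :
    ∀ K : Set ℝ, Bornology.IsBounded K → K ⊆ {(0 : ℝ)}ᶜ →
      TendstoUniformlyOn (fun t x => usol F Δ t x)
        (fun x => -(Real.sign x) * Real.sqrt (2 * (1 - g x))) atTop K := by
  intro K hK hK₀
  obtain ⟨b, hb⟩ := hK.exists_norm_le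
  rw [Metric.tendstoUniformlyOn_iff]
  intro ε hε
  have hrate : Tendsto (fun t : ℝ => (π / 2 + 2 * b) / t) atTop (𝓝 0) :=
    tendsto_const_nhds.div_atTop tendsto_id
  filter_upwards [eventually_gt_atTop 0, hrate.eventually_lt_const hε] with t ht htε x hx
  rw [dist_comm, Real.dist_eq]
  calc _ ≤ (π / 2 + 2 * |x|) / t := abs_usol_sub_le hF hΔ ht (hK₀ hx)
    _ ≤ (π / 2 + 2 * b) / t := by gcongr; exact hb x hx
    _ < ε := htε

/-- Local uniform convergence: with `w∞(x) = -sgn(x) √(2(1-g(x)))`, for every compact set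
`K ⊆ ℝ \ {0}`, `u(t,·) → w∞` uniformly on `K` as `t → +∞`. -/
theorem stmt_18 (F : ℝ → ℝ → ℝ → ℝ × ℝ) (hF : IsHSFlow F)
    (Δ : ℝ → ℝ → ℝ × ℝ) (hΔ : IsDeltaMap F Δ) :
    ∀ K : Set ℝ, IsCompact K → K ⊆ {(0:ℝ)}ᶜ →
      TendstoUniformlyOn (fun t x => usol F Δ t x)
        (fun x => -(Real.sign x) * Real.sqrt (2 * (1 - g x))) atTop K := by
  exact fun K hK => stmt_18_general F hF Δ hΔ K hK.isBounded
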